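/- Let γ be a modular bridge from Ω_A to Ω_B. Let a ∈ dom(L_A), ω ∈ dom(D_M), l ≥ D_M(ω) and l' ≥ L_A(a). If b ∈ t_γ(a|l') and η ∈ t_γ(ω|l), then b·η belongs to the modular target set t_γ(a·ω | G(‖a‖_A + 2·l'·λ(γ), l', l)). -/

import Mathlib

/-!
Two inequalities are needed for `b • η`: a bound on its `D`-norm and a bound on its deck distance
to `a • ω`.

The `D`-norm is controlled by the Leibniz inequality `D (b • η) ≤ G ‖b‖ (L b) (D η)` once
`‖b‖ ≤ ‖a‖ + 2 l' λ` is known (`ModularBridge.norm_le_of_mem_atarget`). For this, pick a state `ψ`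
of `B` norming the self-adjoint element `b` (`exists_state_norm_eq`). By definition of the height,
`ψ` is within `λ + ε` of the restriction of a state `φ` in the 1-level set of the pivot `x`, which
costs at most `l' (λ + ε)` when evaluated at `b`. By Cauchy–Schwarz `φ` does not see the pivot:
`φ (a x) = φ a` and `φ (x b) = φ b`, so that `φ b` differs from `φ a` by at most the bridge seminorm
`bn a b ≤ l' ρ_♭ ≤ l' λ`.

For the deck seminorm, `bn (a c) (b d) ≤ ‖a‖ bn c d + bn a b ‖d‖`
(`ModularBridge.bn_mul_le`) is applied to the inner products `c`, `d` of `ω`, `η` with an anchor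
and a co-anchor, whose norms are at most `l` by Cauchy–Schwarz in the modules. The products in the
opposite order, coming from the inner products taken the other way round, are treated in the same
way with the bound on `‖b‖`. With `N = ‖a‖ + 2 l' λ`, both are at most
`(N + l') l ρ ≤ G N l' l ρ`.

All suprema are real suprema, whose value on an unbounded set is `0`, so boundedness has to be
established. For the deck seminorm it is Cauchy–Schwarz again. For the Monge–Kantorovich
metric it must be extracted from the hypothesis that its balls generate the weak-* topology:
`QLSpace.bddAbove_mk` shows that `mkDist` is never the supremum of an unbounded set, and weak-*
compactness of the state space then gives it a finite radius (`QLSpace.exists_radius`), which makes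
the Hausdorff distance in the height meaningful.
-/


open scoped ComplexOrder

noncomputable section

/-! ### Admissible functions -/

/-- A function `F : [0,∞)⁴ → [0,∞)` is admissible when it is nondecreasing in each argument
and dominates `x₁x₃ + x₂x₄`. -/
def Admissible (F : ℝ → ℝ → ℝ → ℝ → ℝ) : Prop :=
  (∀ x₁ x₂ x₃ x₄ y₁ y₂ y₃ y₄ : ℝ, 0 ≤ x₁ → 0 ≤ x₂ → 0 ≤ x₃ → 0 ≤ x₄ →
      x₁ ≤ y₁ → x₂ ≤ y₂ → x₃ ≤ y₃ → x₄ ≤ y₄ → F x₁ x₂ x₃ x₄ ≤ F y₁ y₂ y₃ y₄) ∧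
  (∀ x₁ x₂ x₃ x₄ : ℝ, 0 ≤ x₁ → 0 ≤ x₂ → 0 ≤ x₃ → 0 ≤ x₄ →
      x₁ * x₃ + x₂ * x₄ ≤ F x₁ x₂ x₃ x₄)

/-- An admissible triple `(F,G,H)`. -/
def AdmissibleTriple (F : ℝ → ℝ → ℝ → ℝ → ℝ) (G : ℝ → ℝ → ℝ → ℝ) (H : ℝ → ℝ → ℝ) : Prop :=
  Admissible F ∧
  (∀ x y z x' y' z' : ℝ, 0 ≤ x → 0 ≤ y → 0 ≤ z → x ≤ x' → y ≤ y' → z ≤ z' →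
      G x y z ≤ G x' y' z') ∧
  (∀ x y z : ℝ, 0 ≤ x → 0 ≤ y → 0 ≤ z → (x + y) * z ≤ G x y z) ∧
  (∀ x y x' y' : ℝ, 0 ≤ x → 0 ≤ y → x ≤ x' → y ≤ y' → H x y ≤ H x' y') ∧
  (∀ x y : ℝ, 0 ≤ x → 0 ≤ y → 2 * x * y ≤ H x y)

section ReIm

variable {A : Type*} [NormedRing A] [StarRing A] [NormedAlgebra ℂ A]

/-- The real part `(a + a*)/2` of an element of a complex `*`-algebra. -/
def reEl (a : A) : A := (2⁻¹ : ℂ) • (a + star a)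

/-- The imaginary part `(a - a*)/(2i)` of an element of a complex `*`-algebra. -/
def imEl (a : A) : A := ((2 * Complex.I)⁻¹ : ℂ) • (a - star a)

end ReIm

/-! ### States -/

/-- A state on a unital complex `*`-algebra: a linear functional which is unital
and positive. -/
structure CState (A : Type*) [NormedRing A] [StarRing A] [NormedAlgebra ℂ A] where
  toFun : A →ₗ[ℂ] ℂ
  map_one : toFun 1 = 1
  positive : ∀ a : A, 0 ≤ toFun (star a * a)

/-- The topology induced by a distance function, generated by its open balls. -/
def ballTopology {X : Type*} (d : X → X → ℝ) : TopologicalSpace X :=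
  TopologicalSpace.generateFrom {s | ∃ (x : X) (ε : ℝ), 0 < ε ∧ s = {y | d x y < ε}}

/-- The Hausdorff distance between two sets, relative to a distance function. -/
def hausDist {X : Type*} (d : X → X → ℝ) (S T : Set X) : ℝ :=
  max (sSup {r | ∃ x ∈ S, r = sInf {s | ∃ y ∈ T, s = d x y}})
      (sSup {r | ∃ y ∈ T, r = sInf {s | ∃ x ∈ S, s = d x y}})

/-- The diameter of a set relative to a distance function. -/
def setDiam {X : Type*} (d : X → X → ℝ) (S : Set X) : ℝ :=
  sSup {r | ∃ x ∈ S, ∃ y ∈ S, r = d x y}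

/-- The weak-* topology on the state space. -/
def stateWeakTopology (A : Type*) [NormedRing A] [StarRing A] [NormedAlgebra ℂ A] :
    TopologicalSpace (CState A) :=
  TopologicalSpace.induced (fun (φ : CState A) (a : A) => φ.toFun a) Pi.topologicalSpace

/-- The Monge-Kantorovich metric associated with a Lipschitz seminorm `L` with domain `dom`. -/
def mkDist {A : Type*} [NormedRing A] [StarRing A] [NormedAlgebra ℂ A]
    (dom : Set A) (L : A → ℝ) (φ ψ : CState A) : ℝ :=
  sSup {r | ∃ a ∈ dom, L a ≤ 1 ∧ r = ‖φ.toFun a - ψ.toFun a‖}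

/-- The 1-level set of a pivot is nonempty. -/
def pivotLevelNonempty {D : Type*} [NormedRing D] [StarRing D] [NormedAlgebra ℂ D]
    (x : D) : Prop :=
  ∃ φ : CState D,
    φ.toFun (star (1 - x) * (1 - x)) = 0 ∧ φ.toFun ((1 - x) * star (1 - x)) = 0

/-! ### Quasi-Leibniz quantum compact metric spaces -/

/-- An `F`-quasi-Leibniz quantum compact metric space structure on a unital C*-algebra `A`:
a Lipschitz seminorm `L` defined on a dense Jordan-Lie subalgebra `dom` of the self-adjoint
part of `A`, vanishing exactly on `ℝ1`, lower semicontinuous, whose Monge-Kantorovich metric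
metrizes the weak-* topology on the state space, and satisfying the `F`-quasi-Leibniz
inequality. -/
structure QLSpace (A : Type*) [NormedRing A] [StarRing A] [CStarRing A]
    [NormedAlgebra ℂ A] [StarModule ℂ A] [CompleteSpace A]
    (F : ℝ → ℝ → ℝ → ℝ → ℝ) where
  dom : Set A
  L : A → ℝ
  dom_selfAdjoint : ∀ a ∈ dom, IsSelfAdjoint a
  dom_dense : closure dom = {a : A | IsSelfAdjoint a}
  dom_add : ∀ a ∈ dom, ∀ b ∈ dom, a + b ∈ dom
  dom_smul : ∀ (t : ℝ), ∀ a ∈ dom, (t : ℂ) • a ∈ dom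
  dom_jordan : ∀ a ∈ dom, ∀ b ∈ dom, (2⁻¹ : ℂ) • (a * b + b * a) ∈ dom
  dom_lie : ∀ a ∈ dom, ∀ b ∈ dom, ((2 * Complex.I)⁻¹ : ℂ) • (a * b - b * a) ∈ dom
  one_mem : (1 : A) ∈ dom
  L_nonneg : ∀ a : A, 0 ≤ L a
  L_add : ∀ a ∈ dom, ∀ b ∈ dom, L (a + b) ≤ L a + L b
  L_smul : ∀ (t : ℝ), ∀ a ∈ dom, L ((t : ℂ) • a) = |t| * L a
  L_eq_zero_iff : ∀ a ∈ dom, (L a = 0 ↔ ∃ t : ℝ, a = (t : ℂ) • (1 : A))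
  lowerSemicontinuous : IsClosed {a : A | a ∈ dom ∧ L a ≤ 1}
  leibniz_jordan : ∀ a ∈ dom, ∀ b ∈ dom,
      L ((2⁻¹ : ℂ) • (a * b + b * a)) ≤ F ‖a‖ ‖b‖ (L a) (L b)
  leibniz_lie : ∀ a ∈ dom, ∀ b ∈ dom,
      L (((2 * Complex.I)⁻¹ : ℂ) • (a * b - b * a)) ≤ F ‖a‖ ‖b‖ (L a) (L b)
  mk_metrizes : ballTopology (mkDist dom L) = stateWeakTopology A
/-! ### Metrized quantum vector bundles -/

/-- An `(F,G,H)`-metrized quantum vector bundle: a left Hilbert module `M` over a unital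
C*-algebra `A` equipped with an `F`-quasi-Leibniz quantum compact metric space structure,
together with a D-norm `D` defined on a dense subspace `Ddom` of `M`, dominating the
C*-Hilbert norm, with compact unit ball, and satisfying the inner and modular quasi-Leibniz
inequalities with respect to `G` and `H`. -/
structure BundledMQVB (F : ℝ → ℝ → ℝ → ℝ → ℝ) (G : ℝ → ℝ → ℝ → ℝ) (H : ℝ → ℝ → ℝ) where
  A : Type
  [instRing : NormedRing A]
  [instStarRing : StarRing A]
  [instCStar : CStarRing A]
  [instAlg : NormedAlgebra ℂ A]
  [instStarMod : StarModule ℂ A]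
  [instComplete : CompleteSpace A]
  M : Type
  [instM : NormedAddCommGroup M]
  [instMC : Module ℂ M]
  [instMA : Module A M]
  [instTower : IsScalarTower ℂ A M]
  [instMComplete : CompleteSpace M]
  base : QLSpace A F
  inn : M → M → A
  Ddom : Set M
  D : M → ℝ
  inn_add_left : ∀ x y z : M, inn (x + y) z = inn x z + inn y z
  inn_smul_left : ∀ (a : A) (x y : M), inn (a • x) y = a * inn x y
  inn_smul_leftC : ∀ (c : ℂ) (x y : M), inn (c • x) y = c • inn x y
  inn_star : ∀ x y : M, star (inn x y) = inn y x
  inn_pos : ∀ x : M, ∃ b : A, inn x x = star b * b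
  inn_definite : ∀ x : M, inn x x = 0 → x = 0
  norm_eq : ∀ x : M, ‖x‖ = Real.sqrt ‖inn x x‖
  Ddom_dense : Dense Ddom
  Ddom_add : ∀ x ∈ Ddom, ∀ y ∈ Ddom, x + y ∈ Ddom
  Ddom_smul : ∀ (c : ℂ), ∀ x ∈ Ddom, c • x ∈ Ddom
  D_nonneg : ∀ x : M, 0 ≤ D x
  D_add : ∀ x ∈ Ddom, ∀ y ∈ Ddom, D (x + y) ≤ D x + D y
  D_smul : ∀ (c : ℂ), ∀ x ∈ Ddom, D (c • x) = ‖c‖ * D x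
  norm_le_D : ∀ x ∈ Ddom, ‖x‖ ≤ D x
  D_ball_compact : IsCompact {x : M | x ∈ Ddom ∧ D x ≤ 1}
  D_leibniz : ∀ a ∈ base.dom, ∀ x ∈ Ddom,
      a • x ∈ Ddom ∧ D (a • x) ≤ G ‖a‖ (base.L a) (D x)
  inn_leibniz : ∀ x ∈ Ddom, ∀ y ∈ Ddom,
      reEl (inn x y) ∈ base.dom ∧ imEl (inn x y) ∈ base.dom ∧
      base.L (reEl (inn x y)) ≤ H (D x) (D y) ∧
      base.L (imEl (inn x y)) ≤ H (D x) (D y)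

attribute [instance] BundledMQVB.instRing BundledMQVB.instStarRing BundledMQVB.instCStar
  BundledMQVB.instAlg BundledMQVB.instStarMod BundledMQVB.instComplete
  BundledMQVB.instM BundledMQVB.instMC BundledMQVB.instMA BundledMQVB.instTower
  BundledMQVB.instMComplete

variable {F : ℝ → ℝ → ℝ → ℝ → ℝ} {G : ℝ → ℝ → ℝ → ℝ} {H : ℝ → ℝ → ℝ}

/-- The closed ball of radius `r` for the D-norm of a metrized quantum vector bundle. -/
def BundledMQVB.Dball (Ω : BundledMQVB F G H) (r : ℝ) : Set Ω.M :=
  {ω | ω ∈ Ω.Ddom ∧ Ω.D ω ≤ r}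

/-- The modular Monge-Kantorovich metric of a metrized quantum vector bundle. -/
def BundledMQVB.mkD (Ω : BundledMQVB F G H) (x y : Ω.M) : ℝ :=
  sSup {r | ∃ ξ ∈ Ω.Ddom, Ω.D ξ ≤ 1 ∧ r = ‖Ω.inn x ξ - Ω.inn y ξ‖}

/-- The `A`-weak topology on the module of a metrized quantum vector bundle. -/
def BundledMQVB.aWeak (Ω : BundledMQVB F G H) : TopologicalSpace Ω.M :=
  TopologicalSpace.induced (fun (ω : Ω.M) (ξ : Ω.M) => Ω.inn ω ξ) Pi.topologicalSpace
/-! ### Modular bridges -/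

/-- A modular bridge between two metrized quantum vector bundles. -/
structure ModularBridge (ΩA ΩB : BundledMQVB F G H) where
  Dalg : Type
  [instDRing : NormedRing Dalg]
  [instDStarRing : StarRing Dalg]
  [instDCStar : CStarRing Dalg]
  [instDAlg : NormedAlgebra ℂ Dalg]
  [instDStarMod : StarModule ℂ Dalg]
  [instDComplete : CompleteSpace Dalg]
  J : Type
  [instJ : Nonempty J]
  pivot : Dalg
  piA : ΩA.A →⋆ₐ[ℂ] Dalg
  piB : ΩB.A →⋆ₐ[ℂ] Dalg
  piA_inj : Function.Injective piA
  piB_inj : Function.Injective piB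
  pivot_norm : ‖pivot‖ = 1
  levelSet_nonempty : pivotLevelNonempty pivot
  anchors : J → ΩA.M
  coanchors : J → ΩB.M
  anchors_mem : ∀ j, anchors j ∈ ΩA.Ddom
  anchors_le : ∀ j, ΩA.D (anchors j) ≤ 1
  coanchors_mem : ∀ j, coanchors j ∈ ΩB.Ddom
  coanchors_le : ∀ j, ΩB.D (coanchors j) ≤ 1

attribute [instance] ModularBridge.instDRing ModularBridge.instDStarRing
  ModularBridge.instDCStar ModularBridge.instDAlg ModularBridge.instDStarMod
  ModularBridge.instDComplete ModularBridge.instJ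

namespace ModularBridge

variable {ΩA ΩB : BundledMQVB F G H}

/-- The bridge seminorm of a modular bridge. -/
def bn (γ : ModularBridge ΩA ΩB) (a : ΩA.A) (b : ΩB.A) : ℝ :=
  ‖γ.piA a * γ.pivot - γ.pivot * γ.piB b‖

/-- The deck seminorm of a modular bridge. -/
def dn (γ : ModularBridge ΩA ΩB) (ω : ΩA.M) (η : ΩB.M) : ℝ :=
  ⨆ k : γ.J,
    max (γ.bn (ΩA.inn ω (γ.anchors k)) (ΩB.inn η (γ.coanchors k)))
        (γ.bn (ΩA.inn (γ.anchors k) ω) (ΩB.inn (γ.coanchors k) η))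

/-- The basic reach of a modular bridge. -/
def basicReach (γ : ModularBridge ΩA ΩB) : ℝ :=
  max
    (sSup {r | ∃ a ∈ ΩA.base.dom, ΩA.base.L a ≤ 1 ∧
        r = sInf {s | ∃ b ∈ ΩB.base.dom, ΩB.base.L b ≤ 1 ∧ s = γ.bn a b}})
    (sSup {r | ∃ b ∈ ΩB.base.dom, ΩB.base.L b ≤ 1 ∧
        r = sInf {s | ∃ a ∈ ΩA.base.dom, ΩA.base.L a ≤ 1 ∧ s = γ.bn a b}})

/-- The modular reach of a modular bridge. -/
def modularReach (γ : ModularBridge ΩA ΩB) : ℝ :=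
  ⨆ j : γ.J, γ.dn (γ.anchors j) (γ.coanchors j)

/-- The imprint of a modular bridge. -/
def imprint (γ : ModularBridge ΩA ΩB) : ℝ :=
  max (hausDist ΩA.mkD (Set.range γ.anchors) (ΩA.Dball 1))
      (hausDist ΩB.mkD (Set.range γ.coanchors) (ΩB.Dball 1))

/-- The reach of a modular bridge. -/
def reach (γ : ModularBridge ΩA ΩB) : ℝ :=
  max γ.basicReach (γ.modularReach + γ.imprint)

/-- The states of the bridge algebra in the 1-level set of the pivot. -/
def levelStates (γ : ModularBridge ΩA ΩB) : Set (CState γ.Dalg) :=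
  {φ | φ.toFun (star (1 - γ.pivot) * (1 - γ.pivot)) = 0 ∧
       φ.toFun ((1 - γ.pivot) * star (1 - γ.pivot)) = 0}

/-- The height of a modular bridge. -/
def height (γ : ModularBridge ΩA ΩB) : ℝ :=
  max
    (hausDist (mkDist ΩA.base.dom ΩA.base.L) (Set.univ : Set (CState ΩA.A))
      {ψ | ∃ φ ∈ γ.levelStates, ∀ a : ΩA.A, ψ.toFun a = φ.toFun (γ.piA a)})
    (hausDist (mkDist ΩB.base.dom ΩB.base.L) (Set.univ : Set (CState ΩB.A))
      {ψ | ∃ φ ∈ γ.levelStates, ∀ b : ΩB.A, ψ.toFun b = φ.toFun (γ.piB b)})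

/-- The length of a modular bridge. -/
def length (γ : ModularBridge ΩA ΩB) : ℝ := max γ.reach γ.height

/-- The `l`-modular target set of `ω` for a modular bridge. -/
def mtarget (γ : ModularBridge ΩA ΩB) (ω : ΩA.M) (l : ℝ) : Set ΩB.M :=
  {η | η ∈ ΩB.Ddom ∧ ΩB.D η ≤ l ∧ γ.dn ω η ≤ l * γ.reach}

/-- The `l`-target set of `a` for a modular bridge. -/
def atarget (γ : ModularBridge ΩA ΩB) (a : ΩA.A) (l : ℝ) : Set ΩB.A :=
  {b | b ∈ ΩB.base.dom ∧ ΩB.base.L b ≤ l ∧ γ.bn a b ≤ l * γ.basicReach}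

/-- The reverse of a modular bridge. -/
def reverse (γ : ModularBridge ΩA ΩB) : ModularBridge ΩB ΩA where
  Dalg := γ.Dalg
  J := γ.J
  pivot := star γ.pivot
  piA := γ.piB
  piB := γ.piA
  piA_inj := γ.piB_inj
  piB_inj := γ.piA_inj
  pivot_norm := by rw [norm_star]; exact γ.pivot_norm
  levelSet_nonempty := by
    obtain ⟨φ, h1, h2⟩ := γ.levelSet_nonempty
    refine ⟨φ, ?_, ?_⟩
    · have e1 : star ((1 : γ.Dalg) - star γ.pivot) = 1 - γ.pivot := by
        simp [star_sub]
      have e2 : (1 : γ.Dalg) - star γ.pivot = star (1 - γ.pivot) := by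
        simp [star_sub]
      rw [e1, e2]; exact h2
    · have e1 : star ((1 : γ.Dalg) - star γ.pivot) = 1 - γ.pivot := by
        simp [star_sub]
      have e2 : (1 : γ.Dalg) - star γ.pivot = star (1 - γ.pivot) := by
        simp [star_sub]
      rw [e1, e2]; exact h1
  anchors := γ.coanchors
  coanchors := γ.anchors
  anchors_mem := γ.coanchors_mem
  anchors_le := γ.coanchors_le
  coanchors_mem := γ.anchors_mem
  coanchors_le := γ.anchors_le

end ModularBridge

/-! ### Modular treks -/

/-- A modular trek: a finite chain of composable modular bridges. -/
inductive Trek (F : ℝ → ℝ → ℝ → ℝ → ℝ) (G : ℝ → ℝ → ℝ → ℝ) (H : ℝ → ℝ → ℝ) :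
    BundledMQVB F G H → BundledMQVB F G H → Type 1
  | single {ΩA ΩB : BundledMQVB F G H} (γ : ModularBridge ΩA ΩB) : Trek F G H ΩA ΩB
  | cons {ΩA ΩB ΩC : BundledMQVB F G H} (γ : ModularBridge ΩA ΩB)
      (Γ : Trek F G H ΩB ΩC) : Trek F G H ΩA ΩC

namespace Trek

/-- The length of a modular trek: the sum of the lengths of its bridges. -/
def length : ∀ {ΩA ΩB : BundledMQVB F G H}, Trek F G H ΩA ΩB → ℝ
  | _, _, .single γ => γ.length
  | _, _, .cons γ Γ => γ.length + Trek.length Γ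

/-- The modular target set of a modular trek (the set of endpoints of `l`-itineraries). -/
def mtarget : ∀ {ΩA ΩB : BundledMQVB F G H}, Trek F G H ΩA ΩB → ΩA.M → ℝ → Set ΩB.M
  | _, _, .single γ, ω, l => γ.mtarget ω l
  | _, _, .cons γ Γ, ω, l => {η | ∃ ξ ∈ γ.mtarget ω l, η ∈ Trek.mtarget Γ ξ l}

/-- The target set of a modular trek on the base algebras. -/
def atarget : ∀ {ΩA ΩB : BundledMQVB F G H}, Trek F G H ΩA ΩB → ΩA.A → ℝ → Set ΩB.A
  | _, _, .single γ, a, l => γ.atarget a l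
  | _, _, .cons γ Γ, a, l => {b | ∃ c ∈ γ.atarget a l, b ∈ Trek.atarget Γ c l}

end Trek

/-! ### States of a unital C*-algebra -/

section States

lemma continuous_eval_state {A : Type*} [NormedRing A] [StarRing A] [NormedAlgebra ℂ A] (c : A) :
    @Continuous (CState A) ℂ (stateWeakTopology A) _ (fun φ => φ.toFun c) := by
  let := stateWeakTopology A
  have h : Continuous (fun (φ : CState A) (a : A) => φ.toFun a) := continuous_induced_dom
  exact (continuous_apply c).comp h

variable {A : Type*} [NormedRing A] [StarRing A] [CStarRing A] [NormedAlgebra ℂ A]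
  [StarModule ℂ A] [CompleteSpace A]

/-- Cauchy–Schwarz for a state: the semi-inner product is the one of the GNS construction. -/
lemma CState.cauchy_schwarz (φ : CState A) (u v : A) :
    ‖φ.toFun (star u * v)‖ ≤
      √(φ.toFun (star u * u)).re * √(φ.toFun (star v * v)).re := by
  let : CStarAlgebra A := {}
  let := CStarAlgebra.spectralOrder A
  have := CStarAlgebra.spectralOrderedRing A
  let f : A →ₚ[ℂ] ℂ := PositiveLinearMap.mk₀ φ.toFun (by
    intro x hx
    obtain ⟨c, rfl⟩ := CStarAlgebra.nonneg_iff_eq_star_mul_self.mp hx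
    exact φ.positive c)
  exact norm_inner_le_norm (𝕜 := ℂ) (f.toPreGNS u) (f.toPreGNS v)

lemma norm_smul_one_sub_le (a : A) :
    ‖((‖star a * a‖ : ℝ) : ℂ) • (1 : A) - star a * a‖ ≤ ‖star a * a‖ := by
  let : CStarAlgebra A := {}
  let := CStarAlgebra.spectralOrder A
  have := CStarAlgebra.spectralOrderedRing A
  rcases subsingleton_or_nontrivial A with hA | hA
  · rw [Subsingleton.elim (_ - _) (0 : A)]; simp
  have h0 : 0 ≤ star a * a := star_mul_self_nonneg a
  have h1 : star a * a ≤ algebraMap ℝ A ‖star a * a‖ :=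
    IsSelfAdjoint.le_algebraMap_norm_self (.of_nonneg h0)
  have e : ((‖star a * a‖ : ℝ) : ℂ) • (1 : A) = algebraMap ℝ A ‖star a * a‖ := by
    rw [Complex.coe_smul, Algebra.algebraMap_eq_smul_one]
  rw [e]
  refine (CStarAlgebra.norm_le_norm_of_nonneg_of_le (sub_nonneg.mpr h1)
    (sub_le_self _ h0)).trans ?_
  simp [norm_algebraMap']

/-- A state has norm at most one. -/
lemma CState.norm_apply_le (φ : CState A) (a : A) : ‖φ.toFun a‖ ≤ ‖a‖ := by
  let : CStarAlgebra A := {}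
  let := CStarAlgebra.spectralOrder A
  have := CStarAlgebra.spectralOrderedRing A
  let f : A →ₚ[ℂ] ℂ := PositiveLinearMap.mk₀ φ.toFun (by
    intro x hx
    obtain ⟨c, rfl⟩ := CStarAlgebra.nonneg_iff_eq_star_mul_self.mp hx
    exact φ.positive c)
  have h1 : ‖φ.toFun (star a * a)‖ ≤ ‖a‖ * ‖a‖ := by
    have := f.norm_apply_le_of_nonneg (star a * a) (star_mul_self_nonneg a)
    have e : f 1 = 1 := φ.map_one
    rw [e, norm_one, one_mul, CStarRing.norm_star_mul_self] at this
    exact this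
  have h2 := φ.cauchy_schwarz 1 a
  rw [star_one, one_mul, one_mul, φ.map_one, Complex.one_re, Real.sqrt_one, one_mul] at h2
  refine h2.trans (Real.sqrt_le_iff.mpr ⟨norm_nonneg _, ?_⟩)
  rw [sq]
  exact (Complex.re_le_norm _).trans h1

/-- A unital contractive functional is positive. -/
lemma nonneg_of_contractive (g : A →ₗ[ℂ] ℂ) (h1 : g 1 = 1) (hg : ∀ a, ‖g a‖ ≤ ‖a‖) (a : A) :
    0 ≤ g (star a * a) := by
  set y := star a * a with hy
  have hre : 0 ≤ (g y).re := by
    have h := (hg _).trans (norm_smul_one_sub_le a)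
    rw [map_sub, map_smul, h1, ← hy] at h
    have h' := (Complex.re_le_norm _).trans h
    simp at h'
    exact h'
  have hsa : star y = y := by simp [hy]
  -- `‖y + i t‖² ≤ ‖y‖² + t²` for all real `t` forces the imaginary part of `g y` to vanish.
  have key : ∀ t : ℝ, ((g y).im + t) ^ 2 ≤ ‖y‖ ^ 2 + t ^ 2 * ‖(1 : A)‖ := by
    intro t
    have h := hg (y + ((t : ℂ) * Complex.I) • (1 : A))
    have e : star (y + ((t : ℂ) * Complex.I) • (1 : A)) * (y + ((t : ℂ) * Complex.I) • (1 : A))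
        = y * y + ((t ^ 2 : ℝ) : ℂ) • (1 : A) := by
      rw [star_add, star_smul, star_one, hsa]
      have hz : star ((t : ℂ) * Complex.I) = -((t : ℂ) * Complex.I) := by simp
      have hz2 : ((t ^ 2 : ℝ) : ℂ) = -((t : ℂ) * Complex.I) * ((t : ℂ) * Complex.I) := by
        push_cast
        linear_combination (t : ℂ) ^ 2 * Complex.I_sq
      rw [hz, hz2]
      generalize (t : ℂ) * Complex.I = z
      simp only [mul_add, add_mul, smul_mul_assoc, mul_smul_comm, one_mul, mul_one]
      module
    have hn : ‖y + ((t : ℂ) * Complex.I) • (1 : A)‖ ^ 2 ≤ ‖y‖ ^ 2 + t ^ 2 * ‖(1 : A)‖ := by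
      rw [sq, ← CStarRing.norm_star_mul_self, e]
      refine (norm_add_le _ _).trans (add_le_add ?_ ?_)
      · rw [sq]; exact norm_mul_le _ _
      · rw [norm_smul, Complex.norm_real, Real.norm_of_nonneg (sq_nonneg t)]
    have him : |(g y).im + t| ≤ ‖y + ((t : ℂ) * Complex.I) • (1 : A)‖ := by
      have h3 := (Complex.abs_im_le_norm _).trans h
      rw [map_add, map_smul, h1] at h3
      simpa using h3
    rw [← sq_abs]
    exact (pow_le_pow_left₀ (abs_nonneg _) him 2).trans hn
  have hA : Nontrivial A := by
    refine ⟨1, 0, fun h => ?_⟩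
    rw [h, map_zero] at h1
    exact zero_ne_one h1
  have hone : ‖(1 : A)‖ = 1 := CStarRing.norm_one
  have him : (g y).im = 0 := by
    by_contra hne
    have h := key ((‖y‖ ^ 2 + 1) / (2 * (g y).im))
    rw [hone, add_sq] at h
    have : 2 * (g y).im * ((‖y‖ ^ 2 + 1) / (2 * (g y).im)) = ‖y‖ ^ 2 + 1 := by field_simp
    nlinarith [sq_nonneg (g y).im]
  exact Complex.nonneg_iff.mpr ⟨hre, him.symm⟩

/-- States norm self-adjoint elements. Up to sign, `‖b‖` lies in the spectrum of `b`, so that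
`‖b‖ 1 ± b` has norm `2‖b‖`; a Hahn–Banach functional norming that element is a state. -/
lemma exists_state_norm_eq [Nontrivial A] {b : A} (hb : IsSelfAdjoint b) (hb0 : b ≠ 0) :
    ∃ ψ : CState A, ‖ψ.toFun b‖ = ‖b‖ := by
  let : CStarAlgebra A := {}
  let := CStarAlgebra.spectralOrder A
  have := CStarAlgebra.spectralOrderedRing A
  have hone : ‖(1 : A)‖ = 1 := CStarRing.norm_one
  have hpos : 0 < ‖b‖ := norm_pos_iff.mpr hb0
  obtain ⟨s, hs, hmem⟩ : ∃ s : ℝ, |s| = 1 ∧ ‖b‖ ∈ spectrum ℝ (s • b) := by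
    rcases CStarAlgebra.norm_or_neg_norm_mem_spectrum hb with h | h
    · exact ⟨1, by simp, by simpa using h⟩
    · refine ⟨-1, by simp, ?_⟩
      rw [neg_one_smul, ← spectrum.neg_eq, Set.mem_neg]
      exact h
  set c : A := algebraMap ℝ A ‖b‖ + s • b with hc
  have hcn : 2 * ‖b‖ ≤ ‖c‖ := by
    have h : ‖b‖ + ‖b‖ ∈ spectrum ℝ c := by
      rw [hc]; exact spectrum.add_mem_add_iff.mpr hmem
    have := spectrum.norm_le_norm_of_mem h
    rw [Real.norm_of_nonneg (by positivity)] at this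
    linarith
  have hc0 : c ≠ 0 := by
    intro h; rw [h, norm_zero] at hcn; linarith
  obtain ⟨g, hg1, hgc⟩ := exists_dual_vector ℂ c (norm_ne_zero_iff.mpr hc0)
  have hle : ∀ a, ‖g a‖ ≤ ‖a‖ := fun a => by simpa [hg1] using g.le_opNorm a
  have hgc' : (‖b‖ : ℂ) * g 1 + (s : ℂ) * g b = ‖c‖ := by
    have e : c = (‖b‖ : ℂ) • (1 : A) + (s : ℂ) • b := by
      rw [hc, Algebra.algebraMap_eq_smul_one, Complex.coe_smul, Complex.coe_smul]
    rw [← smul_eq_mul, ← smul_eq_mul, ← map_smul, ← map_smul, ← map_add, ← e]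
    simpa using hgc
  have hre : ‖b‖ * (g 1).re + s * (g b).re = ‖c‖ := by
    have := congrArg Complex.re hgc'
    simpa using this
  have h1n : ‖g 1‖ ≤ 1 := by simpa [hone] using hle 1
  have h1re : (g 1).re ≤ 1 := (Complex.re_le_norm _).trans h1n
  have hbre : s * (g b).re ≤ |(g b).re| := by
    refine (le_abs_self _).trans ?_
    rw [abs_mul, hs, one_mul]
  have hbn : |(g b).re| ≤ ‖g b‖ := Complex.abs_re_le_norm _
  have hb' := hle b
  have hre1 : (g 1).re = 1 := by
    refine le_antisymm h1re ?_
    have : ‖b‖ * 1 ≤ ‖b‖ * (g 1).re := by linarith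
    exact le_of_mul_le_mul_left this hpos
  have him1 : (g 1).im = 0 := by
    have h := Complex.sq_norm (g 1)
    rw [Complex.normSq_apply, hre1] at h
    nlinarith [norm_nonneg (g 1)]
  have hg1' : g 1 = 1 := Complex.ext (by simpa using hre1) (by simpa using him1)
  refine ⟨⟨g.toLinearMap, hg1', fun a => nonneg_of_contractive g.toLinearMap hg1' hle a⟩, ?_⟩
  refine le_antisymm hb' ?_
  change ‖b‖ ≤ ‖g b‖
  have : ‖b‖ * (g 1).re = ‖b‖ := by rw [hre1, mul_one]
  linarith

/-- The state space is weak-* compact: it embeds as a closed subset of a product of discs. -/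
lemma isCompact_univ_state :
    @IsCompact (CState A) (stateWeakTopology A) Set.univ := by
  let := stateWeakTopology A
  have hind : Topology.IsInducing (fun (φ : CState A) (a : A) => φ.toFun a) := ⟨rfl⟩
  rw [hind.isCompact_iff, Set.image_univ]
  have hK : IsCompact (Set.pi Set.univ fun a : A => Metric.closedBall (0 : ℂ) ‖a‖) :=
    isCompact_univ_pi fun a => isCompact_closedBall _ _
  refine hK.of_isClosed_subset ?_ ?_
  · have e : Set.range (fun (φ : CState A) (a : A) => φ.toFun a) =
        (⋂ a, ⋂ b, {f : A → ℂ | f (a + b) = f a + f b}) ∩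
        ((⋂ c : ℂ, ⋂ a, {f : A → ℂ | f (c • a) = c • f a}) ∩
        ({f : A → ℂ | f 1 = 1} ∩ ⋂ a, {f : A → ℂ | 0 ≤ f (star a * a)})) := by
      ext f
      simp only [Set.mem_inter_iff, Set.mem_iInter, Set.mem_ofPred_eq]
      constructor
      · rintro ⟨φ, rfl⟩
        exact ⟨fun a b => map_add _ _ _, fun c a => map_smul _ _ _, φ.map_one, φ.positive⟩
      · rintro ⟨h1, h2, h3, h4⟩
        exact ⟨⟨⟨⟨f, h1⟩, h2⟩, h3, h4⟩, rfl⟩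
    rw [e]
    refine IsClosed.inter ?_ (IsClosed.inter ?_ (IsClosed.inter ?_ ?_))
    · exact isClosed_iInter fun a => isClosed_iInter fun b =>
        isClosed_eq (by fun_prop) (by fun_prop)
    · exact isClosed_iInter fun a => isClosed_iInter fun b =>
        isClosed_eq (by fun_prop) (by fun_prop)
    · exact isClosed_eq (by fun_prop) (by fun_prop)
    · exact isClosed_iInter fun a => isClosed_le (by fun_prop) (by fun_prop)
  · rintro _ ⟨φ, rfl⟩ a -
    simpa using φ.norm_apply_le a

/-- The convex combination `(1 - t) φ + t ψ` of two states. -/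
def CState.mix (φ ψ : CState A) (t : ℝ) (h0 : 0 ≤ t) (h1 : t ≤ 1) : CState A where
  toFun := ((1 - t : ℝ) : ℂ) • φ.toFun + (t : ℂ) • ψ.toFun
  map_one := by simp [φ.map_one, ψ.map_one]
  positive a := by
    have h2 : (0 : ℂ) ≤ ((1 - t : ℝ) : ℂ) := by exact_mod_cast sub_nonneg.mpr h1
    have h3 : (0 : ℂ) ≤ (t : ℂ) := by exact_mod_cast h0
    simp only [LinearMap.add_apply, LinearMap.smul_apply, smul_eq_mul]
    exact add_nonneg (mul_nonneg h2 (φ.positive a)) (mul_nonneg h3 (ψ.positive a))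

/-- A state in the 1-level set of `x` does not see left multiplication by `x`. -/
lemma CState.level_mul_left (φ : CState A) {x : A}
    (h : φ.toFun ((1 - x) * star (1 - x)) = 0) (d : A) : φ.toFun (x * d) = φ.toFun d := by
  have := φ.cauchy_schwarz (star (1 - x)) d
  rw [star_star, h, Complex.zero_re, Real.sqrt_zero, zero_mul] at this
  have h2 := norm_le_zero_iff.mp this
  rw [sub_mul, one_mul, map_sub, sub_eq_zero] at h2
  exact h2.symm

/-- A state in the 1-level set of `x` does not see right multiplication by `x`. -/
lemma CState.level_mul_right (φ : CState A) {x : A}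
    (h : φ.toFun (star (1 - x) * (1 - x)) = 0) (d : A) : φ.toFun (d * x) = φ.toFun d := by
  have := φ.cauchy_schwarz (star d) (1 - x)
  rw [star_star, h, Complex.zero_re, Real.sqrt_zero, mul_zero] at this
  have h2 := norm_le_zero_iff.mp this
  rw [mul_sub, mul_one, map_sub, sub_eq_zero] at h2
  exact h2.symm

/-- Pulling a state back along a unital `*`-homomorphism. -/
def CState.pullback {D : Type*} [NormedRing D] [StarRing D] [NormedAlgebra ℂ D]
    (φ : CState D) (p : A →⋆ₐ[ℂ] D) : CState A where
  toFun := φ.toFun ∘ₗ p.toAlgHom.toLinearMap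
  map_one := by simp [φ.map_one]
  positive a := by simpa [map_star] using φ.positive (p a)

end States

/-! ### The Monge–Kantorovich metric as a real supremum -/

section MongeKantorovich

lemma mkDist_comm {A : Type*} [NormedRing A] [StarRing A] [NormedAlgebra ℂ A]
    (dom : Set A) (L : A → ℝ) (φ ψ : CState A) :
    mkDist dom L φ ψ = mkDist dom L ψ φ := by
  simp only [mkDist, norm_sub_rev]

variable {A : Type*} [NormedRing A] [StarRing A] [CStarRing A] [NormedAlgebra ℂ A]
  [StarModule ℂ A] [CompleteSpace A] {F : ℝ → ℝ → ℝ → ℝ → ℝ}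

/-- The values `|φ(a) - ψ(a)|`, `L a ≤ 1`, are bounded, so that the real supremum defining
`mkDist` is not a junk value. If they were not, the same would hold for any two points of the
segment from `φ` to `ψ`, and `mkDist` would take the value `0` there. Each `mkDist`-ball would then
miss at most one point of the segment, and the ball topology would restrict on it to a topology
coarser than the cofinite one; yet it is the weak-* topology, which separates `φ` from `ψ`. -/
lemma QLSpace.bddAbove_mk (Q : QLSpace A F) (φ ψ : CState A) :
    BddAbove {r | ∃ a ∈ Q.dom, Q.L a ≤ 1 ∧ r = ‖φ.toFun a - ψ.toFun a‖} := by
  by_contra hnot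
  let p : Set.Icc (0 : ℝ) 1 → CState A := fun t => φ.mix ψ t t.2.1 t.2.2
  have hdiff : ∀ (s t : Set.Icc (0 : ℝ) 1) (a : A),
      ‖(p s).toFun a - (p t).toFun a‖ = |(s : ℝ) - t| * ‖φ.toFun a - ψ.toFun a‖ := by
    intro s t a
    have e : (p s).toFun a - (p t).toFun a =
        (((t : ℝ) - s : ℝ) : ℂ) * (φ.toFun a - ψ.toFun a) := by
      simp only [p, CState.mix, LinearMap.add_apply, LinearMap.smul_apply, smul_eq_mul]
      push_cast
      ring
    rw [e, norm_mul, Complex.norm_real, Real.norm_eq_abs, abs_sub_comm]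
  have hball : ∀ (x : CState A) (ε : ℝ), 0 < ε →
      {t | p t ∉ {y | mkDist Q.dom Q.L x y < ε}}.Finite := by
    intro x ε hε
    refine Set.Subsingleton.finite ?_
    intro s hs t ht
    by_contra hst
    -- A positive supremum is the supremum of a bounded set.
    have hb : ∀ u : Set.Icc (0 : ℝ) 1, p u ∉ {y | mkDist Q.dom Q.L x y < ε} →
        BddAbove {r | ∃ a ∈ Q.dom, Q.L a ≤ 1 ∧ r = ‖x.toFun a - (p u).toFun a‖} := by
      intro u hu
      by_contra h
      refine hu ?_
      change sSup _ < ε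
      rw [Real.sSup_of_not_bddAbove h]
      exact hε
    obtain ⟨B, hB⟩ := hb s hs
    obtain ⟨C, hC⟩ := hb t ht
    have hpos : 0 < |(s : ℝ) - t| := abs_pos.mpr (sub_ne_zero.mpr fun h => hst (Subtype.ext h))
    refine hnot ⟨(B + C) / |(s : ℝ) - t|, ?_⟩
    rintro _ ⟨a, ha, hLa, rfl⟩
    rw [le_div_iff₀ hpos, mul_comm, ← hdiff]
    have h1 := hB ⟨a, ha, hLa, rfl⟩
    have h2 := hC ⟨a, ha, hLa, rfl⟩
    have h3 := norm_sub_le_norm_sub_add_norm_sub ((p s).toFun a) (x.toFun a) ((p t).toFun a)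
    rw [norm_sub_rev ((p s).toFun a) (x.toFun a)] at h3
    linarith
  have hopen : ∀ U : Set (CState A), @IsOpen _ (ballTopology (mkDist Q.dom Q.L)) U →
      (∀ t, p t ∉ U) ∨ {t | p t ∉ U}.Finite := by
    intro U hU
    induction hU with
    | basic s hs =>
      obtain ⟨x, ε, hε, rfl⟩ := hs
      exact Or.inr (hball x ε hε)
    | univ => right; simp
    | inter s t _ _ ihs iht =>
      rcases ihs with h | h
      · exact Or.inl fun u hu => h u hu.1
      rcases iht with h' | h'
      · exact Or.inl fun u hu => h' u hu.2
      · refine Or.inr ((h.union h').subset ?_)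
        intro u hu
        by_contra hc
        simp only [Set.mem_union, Set.mem_ofPred_eq, not_or, not_not] at hc
        exact hu ⟨hc.1, hc.2⟩
    | sUnion S _ ih =>
      by_cases h : ∃ s ∈ S, ∃ t, p t ∈ s
      · obtain ⟨s, hs, t, ht⟩ := h
        rcases ih s hs with h' | h'
        · exact absurd ht (h' t)
        · exact Or.inr (h'.subset fun u hu hus => hu ⟨s, hs, hus⟩)
      · left
        rintro t ⟨s, hs, hts⟩
        exact h ⟨s, hs, t, hts⟩
  obtain ⟨c, hc⟩ : ∃ c, φ.toFun c ≠ ψ.toFun c := by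
    by_contra! h
    refine hnot ⟨0, ?_⟩
    rintro _ ⟨a, -, -, rfl⟩
    simp [h a]
  obtain ⟨U, V, hU, hV, hφ, hψ, hUV⟩ := t2_separation hc
  have hfin : ∀ (W : Set ℂ), IsOpen W → (∃ t, (p t).toFun c ∈ W) →
      {t | (p t).toFun c ∉ W}.Finite := by
    rintro W hW ⟨t, ht⟩
    have h : @IsOpen _ (ballTopology (mkDist Q.dom Q.L)) {θ : CState A | θ.toFun c ∈ W} := by
      rw [Q.mk_metrizes]
      exact @IsOpen.preimage _ _ (stateWeakTopology A) _ _ (continuous_eval_state c) _ hW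
    rcases hopen _ h with h | h
    · exact absurd ht (h t)
    · exact h
  have hfU := hfin U hU ⟨⟨0, by simp⟩, by simpa [p, CState.mix] using hφ⟩
  have hfV := hfin V hV ⟨⟨1, by simp⟩, by simpa [p, CState.mix] using hψ⟩
  have : Infinite (Set.Icc (0 : ℝ) 1) := Set.infinite_coe_iff.mpr (Set.Icc_infinite zero_lt_one)
  refine Set.infinite_univ (α := Set.Icc (0 : ℝ) 1) ((hfU.union hfV).subset fun t _ => ?_)
  by_contra h
  simp only [Set.mem_union, Set.mem_ofPred_eq, not_or, not_not] at h
  exact Set.disjoint_left.mp hUV h.1 h.2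

lemma QLSpace.abs_sub_le (Q : QLSpace A F) (φ ψ : CState A) {a : A} (ha : a ∈ Q.dom) :
    ‖φ.toFun a - ψ.toFun a‖ ≤ Q.L a * mkDist Q.dom Q.L φ ψ := by
  rcases (Q.L_nonneg a).eq_or_lt with h | h
  · obtain ⟨t, rfl⟩ := (Q.L_eq_zero_iff a ha).mp h.symm
    rw [← h]
    simp [φ.map_one, ψ.map_one]
  · have hmem := Q.dom_smul (Q.L a)⁻¹ a ha
    have hL1 : Q.L ((((Q.L a)⁻¹ : ℝ) : ℂ) • a) ≤ 1 := by
      rw [Q.L_smul _ a ha, abs_of_pos (inv_pos.mpr h), inv_mul_cancel₀ h.ne']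
    have h2 := le_csSup (Q.bddAbove_mk φ ψ) ⟨_, hmem, hL1, rfl⟩
    rw [map_smul, map_smul, ← smul_sub, norm_smul, Complex.norm_real,
      Real.norm_of_nonneg (inv_pos.mpr h).le, inv_mul_le_iff₀ h] at h2
    exact h2

lemma QLSpace.mk_nonneg (Q : QLSpace A F) (φ ψ : CState A) : 0 ≤ mkDist Q.dom Q.L φ ψ := by
  refine Real.sSup_nonneg ?_
  rintro _ ⟨a, -, -, rfl⟩
  exact norm_nonneg _

/-- The state space has finite radius about any state, by weak-* compactness. -/
lemma QLSpace.exists_radius (Q : QLSpace A F) (ψ₀ : CState A) :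
    ∃ R : ℝ, ∀ ψ, mkDist Q.dom Q.L ψ₀ ψ ≤ R := by
  let := stateWeakTopology A
  have hc : IsCompact (Set.univ : Set (CState A)) := isCompact_univ_state
  obtain ⟨t, ht⟩ := hc.elim_finite_subcover
    (fun n : ℕ => {y | mkDist Q.dom Q.L ψ₀ y < (n : ℝ) + 1})
    (by
      intro n
      have h : @IsOpen _ (ballTopology (mkDist Q.dom Q.L))
          {y | mkDist Q.dom Q.L ψ₀ y < (n : ℝ) + 1} :=
        TopologicalSpace.isOpen_generateFrom_of_mem ⟨ψ₀, n + 1, by positivity, rfl⟩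
      rw [Q.mk_metrizes] at h
      exact h)
    (by
      intro ψ _
      obtain ⟨n, hn⟩ := exists_nat_gt (mkDist Q.dom Q.L ψ₀ ψ)
      exact Set.mem_iUnion.mpr ⟨n, hn.trans (lt_add_one _)⟩)
  obtain ⟨N, hN⟩ := t.bddAbove
  refine ⟨N + 1, fun ψ => ?_⟩
  obtain ⟨n, hn, hψ⟩ := Set.mem_iUnion₂.mp (ht (Set.mem_univ ψ))
  have : (n : ℝ) ≤ N := by exact_mod_cast hN hn
  have hψ' : mkDist Q.dom Q.L ψ₀ ψ < n + 1 := hψ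
  linarith

/-- The Hausdorff distance from the whole state space to a nonempty set `T` controls the distance
from every state to `T`. -/
lemma QLSpace.exists_near (Q : QLSpace A F) {T : Set (CState A)} (hT : T.Nonempty)
    (ψ : CState A) {ε : ℝ} (hε : 0 < ε) :
    ∃ θ ∈ T, mkDist Q.dom Q.L ψ θ < hausDist (mkDist Q.dom Q.L) Set.univ T + ε := by
  obtain ⟨ψ₀, hψ₀⟩ := hT
  obtain ⟨R, hR⟩ := Q.exists_radius ψ₀
  have hbelow : ∀ ψ, BddBelow {s | ∃ y ∈ T, s = mkDist Q.dom Q.L ψ y} := by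
    intro ψ
    refine ⟨0, ?_⟩
    rintro _ ⟨y, -, rfl⟩
    exact Q.mk_nonneg _ _
  have hbdd : BddAbove {r | ∃ x ∈ (Set.univ : Set (CState A)),
      r = sInf {s | ∃ y ∈ T, s = mkDist Q.dom Q.L x y}} := by
    refine ⟨R, ?_⟩
    rintro _ ⟨x, -, rfl⟩
    refine (csInf_le (hbelow x) ⟨ψ₀, hψ₀, rfl⟩).trans ?_
    rw [mkDist_comm]
    exact hR x
  have h1 : sInf {s | ∃ y ∈ T, s = mkDist Q.dom Q.L ψ y} ≤
      hausDist (mkDist Q.dom Q.L) Set.univ T :=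
    (le_csSup hbdd ⟨ψ, Set.mem_univ _, rfl⟩).trans (le_max_left _ _)
  obtain ⟨_, ⟨θ, hθ, rfl⟩, hlt⟩ :=
    exists_lt_of_csInf_lt (s := {s | ∃ y ∈ T, s = mkDist Q.dom Q.L ψ y})
      ⟨_, ψ₀, hψ₀, rfl⟩ (h1.trans_lt (lt_add_of_pos_right _ hε))
  exact ⟨θ, hθ, hlt⟩

end MongeKantorovich

/-! ### Hilbert modules and bridges -/

/-- Cauchy–Schwarz in the Hilbert module of a bundle, from Mathlib's `CStarModule`, whose inner
product is linear in the second variable. -/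
lemma BundledMQVB.norm_inn_le {F : ℝ → ℝ → ℝ → ℝ → ℝ} {G : ℝ → ℝ → ℝ → ℝ} {H : ℝ → ℝ → ℝ}
    (Ω : BundledMQVB F G H) (x y : Ω.M) : ‖Ω.inn x y‖ ≤ ‖x‖ * ‖y‖ := by
  let _ : CStarAlgebra Ω.A := {}
  let _ := CStarAlgebra.spectralOrder Ω.A
  have _ := CStarAlgebra.spectralOrderedRing Ω.A
  let _ : CStarModule Ω.A Ω.M :=
    { inner := fun u v => Ω.inn v u
      inner_add_right := fun {x y z} => Ω.inn_add_left y z x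
      inner_self_nonneg := fun {x} => by
        obtain ⟨b, hb⟩ := Ω.inn_pos x
        change 0 ≤ Ω.inn x x
        rw [hb]
        exact star_mul_self_nonneg b
      inner_self := fun {x} => by
        refine ⟨Ω.inn_definite x, ?_⟩
        rintro rfl
        have := Ω.inn_smul_left 0 (0 : Ω.M) 0
        rwa [zero_smul, zero_mul] at this
      inner_op_smul_right := fun {a x y} => Ω.inn_smul_left a y x
      inner_smul_right_complex := fun {z x y} => Ω.inn_smul_leftC z y x
      star_inner := fun x y => Ω.inn_star y x
      norm_eq_sqrt_norm_inner_self := fun x => Ω.norm_eq x }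
  have h := CStarModule.norm_inner_le (A := Ω.A) Ω.M (x := y) (y := x)
  rw [mul_comm]
  exact h

namespace ModularBridge

variable {F : ℝ → ℝ → ℝ → ℝ → ℝ} {G : ℝ → ℝ → ℝ → ℝ} {H : ℝ → ℝ → ℝ}
  {ΩA ΩB : BundledMQVB F G H} (γ : ModularBridge ΩA ΩB)

lemma norm_piA (a : ΩA.A) : ‖γ.piA a‖ = ‖a‖ := by
  let _ : CStarAlgebra ΩA.A := {}
  let _ : CStarAlgebra γ.Dalg := {}
  exact NonUnitalStarAlgHom.norm_map γ.piA γ.piA_inj a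

lemma norm_piB (b : ΩB.A) : ‖γ.piB b‖ = ‖b‖ := by
  let _ : CStarAlgebra ΩB.A := {}
  let _ : CStarAlgebra γ.Dalg := {}
  exact NonUnitalStarAlgHom.norm_map γ.piB γ.piB_inj b

lemma bn_nonneg (a : ΩA.A) (b : ΩB.A) : 0 ≤ γ.bn a b := norm_nonneg _

lemma bn_le (a : ΩA.A) (b : ΩB.A) : γ.bn a b ≤ ‖a‖ + ‖b‖ := by
  refine (norm_sub_le _ _).trans (add_le_add ?_ ?_)
  · refine (norm_mul_le _ _).trans_eq ?_
    rw [γ.pivot_norm, mul_one, norm_piA]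
  · refine (norm_mul_le _ _).trans_eq ?_
    rw [γ.pivot_norm, one_mul, norm_piB]

/-- The Leibniz inequality for the bridge seminorm. -/
lemma bn_mul_le (a c : ΩA.A) (b d : ΩB.A) :
    γ.bn (a * c) (b * d) ≤ ‖a‖ * γ.bn c d + γ.bn a b * ‖d‖ := by
  have e : γ.piA (a * c) * γ.pivot - γ.pivot * γ.piB (b * d) =
      γ.piA a * (γ.piA c * γ.pivot - γ.pivot * γ.piB d) +
        (γ.piA a * γ.pivot - γ.pivot * γ.piB b) * γ.piB d := by
    rw [map_mul, map_mul]
    noncomm_ring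
  unfold bn
  rw [e]
  refine (norm_add_le _ _).trans (add_le_add ?_ ?_)
  · exact (norm_mul_le _ _).trans_eq (by rw [norm_piA])
  · exact (norm_mul_le _ _).trans_eq (by rw [norm_piB])

lemma basicReach_nonneg : 0 ≤ γ.basicReach := by
  refine le_max_of_le_left (Real.sSup_nonneg ?_)
  rintro _ ⟨a, -, -, rfl⟩
  refine Real.sInf_nonneg ?_
  rintro _ ⟨b, -, -, rfl⟩
  exact γ.bn_nonneg a b

lemma basicReach_le_reach : γ.basicReach ≤ γ.reach := le_max_left _ _

lemma reach_le_length : γ.reach ≤ γ.length := le_max_left _ _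

lemma height_le_length : γ.height ≤ γ.length := le_max_right _ _

lemma nontrivial_B (γ : ModularBridge ΩA ΩB) : Nontrivial ΩB.A := by
  obtain ⟨φ, -, -⟩ := γ.levelSet_nonempty
  refine ⟨1, 0, fun h => ?_⟩
  have h1 : (1 : γ.Dalg) = 0 := by rw [← map_one γ.piB, h, map_zero]
  have := φ.map_one
  rw [h1, map_zero] at this
  exact zero_ne_one this

/-- An element of a target set is not much longer than its source. A state of `B` norming `b` is
within the height of the restriction of a state `φ` in the 1-level set of the pivot `x`, and
`φ(b) = φ(xb)` differs from `φ(ax) = φ(a)` by at most the bridge seminorm. -/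
lemma norm_le_of_mem_atarget {a : ΩA.A} {b : ΩB.A} {l' : ℝ} (hl0 : 0 ≤ l')
    (hb : b ∈ γ.atarget a l') : ‖b‖ ≤ ‖a‖ + 2 * l' * γ.length := by
  obtain ⟨hbdom, hLb, hbn⟩ := hb
  have hlen0 : 0 ≤ γ.length :=
    γ.basicReach_nonneg.trans (γ.basicReach_le_reach.trans γ.reach_le_length)
  have hreach : l' * γ.basicReach ≤ l' * γ.length :=
    mul_le_mul_of_nonneg_left (γ.basicReach_le_reach.trans γ.reach_le_length) hl0
  by_cases hb0 : b = 0
  · rw [hb0, norm_zero]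
    positivity
  have := γ.nontrivial_B
  obtain ⟨ψ, hψ⟩ := exists_state_norm_eq (ΩB.base.dom_selfAdjoint b hbdom) hb0
  set T : Set (CState ΩB.A) :=
    {ψ | ∃ φ ∈ γ.levelStates, ∀ b : ΩB.A, ψ.toFun b = φ.toFun (γ.piB b)} with hT
  have hTne : T.Nonempty := by
    obtain ⟨φ, h1, h2⟩ := γ.levelSet_nonempty
    exact ⟨φ.pullback γ.piB, φ, ⟨h1, h2⟩, fun _ => rfl⟩
  have hheight : hausDist (mkDist ΩB.base.dom ΩB.base.L) Set.univ T ≤ γ.length :=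
    (le_max_right _ _).trans γ.height_le_length
  -- The height is only approximated by a state of the level set, hence the `ε`.
  have key : ∀ ε : ℝ, 0 < ε → ‖b‖ ≤ ‖a‖ + 2 * l' * γ.length + l' * ε := by
    intro ε hε
    obtain ⟨θ, ⟨φ, ⟨hφ1, hφ2⟩, hθ⟩, hlt⟩ := ΩB.base.exists_near hTne ψ hε
    have h1 : ‖ψ.toFun b - θ.toFun b‖ ≤ l' * (γ.length + ε) :=
      (ΩB.base.abs_sub_le ψ θ hbdom).trans
        (mul_le_mul hLb (by linarith) (ΩB.base.mk_nonneg _ _) hl0)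
    have h2 : ‖θ.toFun b‖ ≤ ‖a‖ + l' * γ.length := by
      have e : θ.toFun b =
          φ.toFun (γ.piA a) - φ.toFun (γ.piA a * γ.pivot - γ.pivot * γ.piB b) := by
        rw [hθ, map_sub, φ.level_mul_right hφ1, φ.level_mul_left hφ2]
        ring
      rw [e]
      refine (norm_sub_le _ _).trans (add_le_add ?_ ?_)
      · exact (φ.norm_apply_le _).trans_eq (γ.norm_piA a)
      · exact (φ.norm_apply_le _).trans (le_trans hbn hreach)
    have h3 : ‖ψ.toFun b‖ ≤ ‖ψ.toFun b - θ.toFun b‖ + ‖θ.toFun b‖ := by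
      simpa using norm_add_le (ψ.toFun b - θ.toFun b) (θ.toFun b)
    rw [hψ] at h3
    linarith
  refine le_of_forall_pos_le_add fun ε hε => ?_
  have h := key (ε / (l' + 1)) (by positivity)
  have h' : l' * (ε / (l' + 1)) ≤ ε := by
    rw [mul_div_assoc', div_le_iff₀ (by positivity)]
    nlinarith
  linarith

/-- The inner products of an element with an element `y` of `D`-norm at most one, such as an anchor `y`, using `‖·‖ ≤ D`. -/
lemma norm_inn_anchor_le {Ω : BundledMQVB F G H} {x y : Ω.M} (hx : x ∈ Ω.Ddom) (hy : y ∈ Ω.Ddom)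
    {l : ℝ} (hl : Ω.D x ≤ l) (h1 : Ω.D y ≤ 1) : ‖Ω.inn x y‖ ≤ l ∧ ‖Ω.inn y x‖ ≤ l := by
  have hxl := (Ω.norm_le_D x hx).trans hl
  have hy1 := (Ω.norm_le_D y hy).trans h1
  have h : ‖x‖ * ‖y‖ ≤ l :=
    (mul_le_of_le_one_right (norm_nonneg x) hy1).trans hxl
  exact ⟨(Ω.norm_inn_le x y).trans h, (Ω.norm_inn_le y x).trans ((mul_comm _ _).trans_le h)⟩

/-- The family whose supremum is the deck seminorm is bounded (by Cauchy–Schwarz, as anchors and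
co-anchors have norm at most one), so each of its members is at most `dn`. -/
lemma le_dn {ω : ΩA.M} (hω : ω ∈ ΩA.Ddom) {η : ΩB.M} (hη : η ∈ ΩB.Ddom) (k : γ.J) :
    γ.bn (ΩA.inn ω (γ.anchors k)) (ΩB.inn η (γ.coanchors k)) ≤ γ.dn ω η ∧
    γ.bn (ΩA.inn (γ.anchors k) ω) (ΩB.inn (γ.coanchors k) η) ≤ γ.dn ω η := by
  have hbdd : BddAbove (Set.range fun k : γ.J =>
      max (γ.bn (ΩA.inn ω (γ.anchors k)) (ΩB.inn η (γ.coanchors k)))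
        (γ.bn (ΩA.inn (γ.anchors k) ω) (ΩB.inn (γ.coanchors k) η))) := by
    refine ⟨ΩA.D ω + ΩB.D η, ?_⟩
    rintro _ ⟨j, rfl⟩
    have hA := norm_inn_anchor_le hω (γ.anchors_mem j) le_rfl (γ.anchors_le j)
    have hB := norm_inn_anchor_le hη (γ.coanchors_mem j) le_rfl (γ.coanchors_le j)
    exact max_le ((γ.bn_le _ _).trans (add_le_add hA.1 hB.1))
      ((γ.bn_le _ _).trans (add_le_add hA.2 hB.2))
  exact max_le_iff.mp (le_ciSup hbdd k)

end ModularBridge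

lemma BundledMQVB.inn_smul_right_of_selfAdjoint {F : ℝ → ℝ → ℝ → ℝ → ℝ} {G : ℝ → ℝ → ℝ → ℝ}
    {H : ℝ → ℝ → ℝ} (Ω : BundledMQVB F G H) {a : Ω.A} (ha : IsSelfAdjoint a) (x y : Ω.M) :
    Ω.inn x (a • y) = Ω.inn x y * a := by
  rw [← Ω.inn_star, Ω.inn_smul_left, star_mul, Ω.inn_star, ha.star_eq]

/-- target sets of modular bridges are compatible with the module structure:
if `b ∈ t_γ(a|l')` and `η ∈ t_γ(ω|l)`, then
`b η ∈ t_γ(a ω | G(‖a‖ + 2 l' λ(γ), l', l))`. -/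
theorem statement9 {F : ℝ → ℝ → ℝ → ℝ → ℝ} {G : ℝ → ℝ → ℝ → ℝ} {H : ℝ → ℝ → ℝ}
    (hFGH : AdmissibleTriple F G H)
    {ΩA ΩB : BundledMQVB F G H} (γ : ModularBridge ΩA ΩB)
    (a : ΩA.A) (ha : a ∈ ΩA.base.dom) (ω : ΩA.M) (hω : ω ∈ ΩA.Ddom)
    (l l' : ℝ) (hl : ΩA.D ω ≤ l) (hl' : ΩA.base.L a ≤ l')
    (b : ΩB.A) (hb : b ∈ γ.atarget a l') (η : ΩB.M) (hη : η ∈ γ.mtarget ω l) :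
    b • η ∈ γ.mtarget (a • ω) (G (‖a‖ + 2 * l' * γ.length) l' l) := by
  obtain ⟨-, hGmono, hGle, -, -⟩ := hFGH
  have hl'0 : 0 ≤ l' := (ΩA.base.L_nonneg a).trans hl'
  have hl0 : 0 ≤ l := (ΩA.D_nonneg ω).trans hl
  have hbN := γ.norm_le_of_mem_atarget hl'0 hb
  obtain ⟨hbdom, hLb, hbn⟩ := hb
  obtain ⟨hηdom, hDη, hdn⟩ := hη
  have hρb := γ.basicReach_nonneg
  have hρbρ := γ.basicReach_le_reach
  have hρ0 : 0 ≤ γ.reach := hρb.trans hρbρ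
  have hlen0 : 0 ≤ γ.length := hρ0.trans γ.reach_le_length
  have haN : ‖a‖ ≤ ‖a‖ + 2 * l' * γ.length := le_add_of_nonneg_right (by positivity)
  obtain ⟨hdom, hD⟩ := ΩB.D_leibniz b hbdom η hηdom
  refine ⟨hdom, hD.trans (hGmono _ _ _ _ _ _ (norm_nonneg _) (ΩB.base.L_nonneg b)
    (ΩB.D_nonneg η) hbN hLb hDη), ?_⟩
  have hbn' : γ.bn a b ≤ l' * γ.reach :=
    le_trans hbn (mul_le_mul_of_nonneg_left hρbρ hl'0)
  set N := ‖a‖ + 2 * l' * γ.length with hN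
  have hN0 : 0 ≤ N := (norm_nonneg a).trans haN
  have hfin : (N + l') * l * γ.reach ≤ G N l' l * γ.reach :=
    mul_le_mul_of_nonneg_right (hGle _ _ _ hN0 hl'0 hl0) hρ0
  refine ciSup_le fun k => ?_
  obtain ⟨h1, h2⟩ := γ.le_dn hω hηdom k
  have hA := (ModularBridge.norm_inn_anchor_le hω (γ.anchors_mem k) hl (γ.anchors_le k)).2
  have hB := (ModularBridge.norm_inn_anchor_le hηdom (γ.coanchors_mem k) hDη
    (γ.coanchors_le k)).1
  rw [ΩA.inn_smul_left, ΩB.inn_smul_left,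
    ΩA.inn_smul_right_of_selfAdjoint (ΩA.base.dom_selfAdjoint a ha),
    ΩB.inn_smul_right_of_selfAdjoint (ΩB.base.dom_selfAdjoint b hbdom)]
  refine max_le ?_ ?_
  · refine (γ.bn_mul_le _ _ _ _).trans (le_trans ?_ hfin)
    have e1 := mul_le_mul haN (h1.trans hdn) (γ.bn_nonneg _ _) hN0
    have e2 := mul_le_mul hbn' hB (norm_nonneg _) (mul_nonneg hl'0 hρ0)
    linarith
  · refine (γ.bn_mul_le _ _ _ _).trans (le_trans ?_ hfin)
    have e1 := mul_le_mul hA hbn' (γ.bn_nonneg _ _) hl0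
    have e2 := mul_le_mul (h2.trans hdn) hbN (norm_nonneg _) (mul_nonneg hl0 hρ0)
    linarith
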